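/- arXiv:0804.2313 — 2 statements merged into one kernel-verified Lean document; each statement's English description precedes it below -/
import Mathlib

section
/- The Airy function Ai is differentiable on ℝ and there is a constant C > 0 such that for every real x, |Ai'(x)| ≤ C (1+|x|)^{1/4}. -/
/-!
Shifting the contour of the defining oscillatory integral to the line `Im w = 1` gives
`Ai z = (1 / 2π) Re ∫ exp (i (w³ / 3 + w z)) dw`, where the integrand has modulus
`exp (-ξ² + 1/3 - z)` at `w = ξ + i`. The integral may therefore be differentiated under the
integral sign, and integrating a total derivative yields the Airy equation `Ai'' = z Ai`. The
modulus bound also gives `|Ai' z| ≤ exp (5/6 - z)`, which settles `z ≥ -1`.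

For `z ≤ -1` only the Airy equation matters. Put `z = -s²`, `w s = Ai (-s²)`, `v s = Ai' (-s²)`, so
that `w' = -2 s v` and `v' = 2 s³ w`. The derivative of the energy `s w² + v² / s` contains
non-integrable terms of order `1 / s`, which the correction `-w v / (2 s³)` cancels; the corrected
energy `E` satisfies `E' = 3 w v / (2 s⁴) ≤ E / s⁴`. As `1 / s⁴` is integrable at infinity, `E` is
bounded, so `v² = O(s)`, that is, `Ai' z = O(|z|^{1/4})`.
-/

open MeasureTheory Filter Real Set
open scoped ENNReal Topology

/-- The Airy function, defined by the improper integral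
`Ai z = (1/π) ∫₀^∞ cos (ξ³/3 + ξ z) dξ` (as a limit of integrals over `[0, R]`). -/
noncomputable def Ai (z : ℝ) : ℝ :=
  limUnder atTop (fun R : ℝ => (1 / π) * ∫ ξ in (0:ℝ)..R, Real.cos (ξ ^ 3 / 3 + ξ * z))

/-- The linear KdV (Airy) group: `(U t φ) x = t^{-1/3} ∫ Ai ((x-y)/t^{1/3}) φ(y) dy`. -/
noncomputable def U (t : ℝ) (φ : ℝ → ℂ) : ℝ → ℂ :=
  fun x => (t ^ (1/3 : ℝ))⁻¹ • ∫ y : ℝ, (Ai ((x - y) / t ^ (1/3 : ℝ)) : ℂ) * φ y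

/-- `(U (-t) φ) x = t^{-1/3} ∫ Ai ((y-x)/t^{1/3}) φ(y) dy` for `t > 0`. -/
noncomputable def Uneg (t : ℝ) (φ : ℝ → ℂ) : ℝ → ℂ :=
  fun x => (t ^ (1/3 : ℝ))⁻¹ • ∫ y : ℝ, (Ai ((y - x) / t ^ (1/3 : ℝ)) : ℂ) * φ y

/-! ### Contour integrals of the Airy kernel -/

section ContourIntegral

open Complex (I)

lemma intervalIntegral_neg_self_eq {E : Type*} [NormedAddCommGroup E] [NormedSpace ℝ E]
    {f : ℝ → E} {R : ℝ} (hf : IntervalIntegrable f volume (-R) R) :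
    ∫ x in (-R)..R, f x = ∫ x in (0 : ℝ)..R, (f x + f (-x)) := by
  have hzero : (0 : ℝ) ∈ uIcc (-R) R := by
    rcases le_total 0 R with hR | hR <;> simp [hR]
  have hleft : IntervalIntegrable f volume (-R) 0 :=
    hf.mono_set (uIcc_subset_uIcc_left hzero)
  have hright : IntervalIntegrable f volume 0 R :=
    hf.mono_set (uIcc_subset_uIcc_right hzero)
  have hreflect : IntervalIntegrable (fun x => f (-x)) volume 0 R := by
    simpa using hleft.symm.comp_sub_left 0
  have hneg : ∫ x in (0 : ℝ)..R, f (-x) = ∫ x in (-R)..0, f x := by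
    rw [intervalIntegral.integral_comp_neg, neg_zero]
  rw [intervalIntegral.integral_add hright hreflect, hneg, add_comm,
    intervalIntegral.integral_add_adjacent_intervals hleft hright]

lemma tendsto_intervalIntegral_of_tendsto_vertical_zero {E : Type*} [NormedAddCommGroup E]
    [NormedSpace ℂ E] {f : ℂ → E} (hf : Differentiable ℂ f) {h : ℝ}
    (hint : Integrable fun x : ℝ => f (x + h * I))
    (hside : Tendsto (fun x : ℝ => ∫ y in (0 : ℝ)..h, f (x + y * I)) (cocompact ℝ) (𝓝 0)) :
    Tendsto (fun R : ℝ => ∫ x in (-R)..R, f x) atTop (𝓝 (∫ x : ℝ, f (x + h * I))) := by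
  have cauchy (R : ℝ) : ∫ x in (-R)..R, f x = (∫ x in (-R)..R, f (x + h * I))
      - I • (∫ y in (0 : ℝ)..h, f (R + y * I))
      + I • (∫ y in (0 : ℝ)..h, f ((-R : ℝ) + y * I)) := by
    have hrect := Complex.integral_boundary_rect_eq_zero_of_differentiableOn f
      ((-R : ℝ) : ℂ) (R + h * I) hf.differentiableOn
    simp only [Complex.ofReal_re, Complex.ofReal_im, Complex.add_re, Complex.add_im,
      Complex.re_ofReal_mul, Complex.im_ofReal_mul, Complex.I_re, Complex.I_im, mul_zero, mul_one,
      add_zero, zero_add, Complex.ofReal_zero, zero_mul] at hrect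
    rw [← sub_eq_zero, ← hrect]
    abel
  rw [cocompact_eq_atBot_atTop, tendsto_sup] at hside
  have hline := intervalIntegral_tendsto_integral hint tendsto_neg_atTop_atBot tendsto_id
  have hlim := (hline.sub (hside.2.const_smul I)).add
    ((hside.1.comp tendsto_neg_atTop_atBot).const_smul I)
  simp only [smul_zero, sub_zero, add_zero] at hlim
  exact hlim.congr fun R => (cauchy R).symm

/-- The entire function `w ↦ exp (i (w³ / 3 + w z))`, whose real part on the real line is the
integrand of `Ai z`. -/
noncomputable def airyKernel (z : ℝ) (w : ℂ) : ℂ :=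
  Complex.exp (I * (w ^ 3 / 3 + w * z))

/-- The `n`-th `z`-derivative `(i w)ⁿ exp (i (w³ / 3 + w z))` of the Airy kernel at the point
`w = x + i` of the line `Im w = 1`. -/
noncomputable def airyIntegrand (n : ℕ) (z x : ℝ) : ℂ :=
  (I * (x + I)) ^ n * airyKernel z (x + I)

/-- The `n`-th `z`-derivative of the Airy integral `∫ exp (i (w³ / 3 + w z)) dw` along the line
`Im w = 1`, taken under the integral sign. -/
noncomputable def airyMoment (n : ℕ) (z : ℝ) : ℂ :=
  ∫ x : ℝ, airyIntegrand n z x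

lemma differentiable_airyKernel (z : ℝ) : Differentiable ℂ (airyKernel z) := by
  unfold airyKernel
  fun_prop

lemma norm_airyKernel (x y z : ℝ) :
    ‖airyKernel z (x + y * I)‖ = exp (-x ^ 2 * y + y ^ 3 / 3 - y * z) := by
  have hexponent : I * (((x : ℂ) + y * I) ^ 3 / 3 + (x + y * I) * z)
      = ((-x ^ 2 * y + y ^ 3 / 3 - y * z : ℝ) : ℂ)
        + ((x ^ 3 / 3 - x * y ^ 2 + x * z : ℝ) : ℂ) * I := by
    push_cast
    linear_combination (x ^ 2 * y + x * y ^ 2 * I + y ^ 3 / 3 * (I ^ 2 - 1) + y * z) * Complex.I_sq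
  rw [airyKernel, hexponent, Complex.norm_exp]
  simp only [Complex.add_re, Complex.ofReal_re, Complex.re_ofReal_mul, Complex.I_re, mul_zero,
    add_zero]

lemma airyKernel_add_airyKernel_neg (x z : ℝ) :
    airyKernel z x + airyKernel z (-x) = ((2 * cos (x ^ 3 / 3 + x * z) : ℝ) : ℂ) := by
  push_cast
  rw [Complex.two_cos, airyKernel, airyKernel]
  ring_nf

lemma norm_airyKernel_le {y h : ℝ} (hy : y ∈ Icc 0 h) (x z : ℝ) :
    ‖airyKernel z (x + y * I)‖ ≤ exp (h ^ 3 / 3 + h * |z|) := by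
  have hcube : y ^ 3 ≤ h ^ 3 := pow_le_pow_left₀ hy.1 hy.2 3
  have hlinear : y * -z ≤ h * |z| :=
    (mul_le_mul_of_nonneg_left (neg_le_abs z) hy.1).trans
      (mul_le_mul_of_nonneg_right hy.2 (abs_nonneg z))
  have hgauss : 0 ≤ x ^ 2 * y := mul_nonneg (sq_nonneg x) hy.1
  rw [norm_airyKernel, exp_le_exp]
  linarith

lemma tendsto_airyKernel_cocompact {y : ℝ} (hy : 0 < y) (z : ℝ) :
    Tendsto (fun x : ℝ => airyKernel z (x + y * I)) (cocompact ℝ) (𝓝 0) := by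
  have hsq : Tendsto (fun x : ℝ => x ^ 2) (cocompact ℝ) atTop := by
    simpa only [Function.comp_def, norm_eq_abs, sq_abs] using
      (tendsto_pow_atTop two_ne_zero).comp (tendsto_norm_cocompact_atTop (E := ℝ))
  rw [tendsto_zero_iff_norm_tendsto_zero]
  simp_rw [norm_airyKernel, add_sub_assoc, neg_mul]
  exact tendsto_exp_atBot.comp (tendsto_atBot_add_const_right _ _
    (tendsto_neg_atTop_atBot.comp (hsq.atTop_mul_const hy)))

lemma tendsto_integral_airyKernel_vertical (z : ℝ) {h : ℝ} (hh : 0 ≤ h) :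
    Tendsto (fun x : ℝ => ∫ y in (0 : ℝ)..h, airyKernel z (x + y * I)) (cocompact ℝ) (𝓝 0) := by
  have : (cocompact ℝ).IsCountablyGenerated := by
    rw [cocompact_eq_atBot_atTop]
    infer_instance
  have hIoc {y : ℝ} (hy : y ∈ uIoc 0 h) : y ∈ Ioc 0 h := uIoc_of_le hh ▸ hy
  have hzero : ∫ _ in (0 : ℝ)..h, (0 : ℂ) = 0 := intervalIntegral.integral_zero
  refine hzero ▸ intervalIntegral.tendsto_integral_filter_of_dominated_convergence
    (fun _ => exp (h ^ 3 / 3 + h * |z|)) (.of_forall fun x => ?_)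
    (.of_forall fun x => .of_forall fun y hy =>
      norm_airyKernel_le (Ioc_subset_Icc_self (hIoc hy)) x z)
    intervalIntegrable_const
    (.of_forall fun y hy => tendsto_airyKernel_cocompact (hIoc hy).1 z)
  exact ((differentiable_airyKernel z).continuous.comp (by fun_prop :
    Continuous fun y : ℝ => (x : ℂ) + y * I)).aestronglyMeasurable

lemma continuous_airyIntegrand (n : ℕ) (z : ℝ) : Continuous (airyIntegrand n z) := by
  unfold airyIntegrand airyKernel
  fun_prop

lemma norm_ofReal_add_I_pow_le (n : ℕ) (x : ℝ) :
    ‖(x : ℂ) + I‖ ^ n ≤ 2 ^ n * n.factorial * exp ((1 + x ^ 2) / 2) := by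
  have hnorm : ‖(x : ℂ) + I‖ ≤ 1 + x ^ 2 := by
    have hsqrt : ‖(x : ℂ) + I‖ = √(x ^ 2 + 1) := by simpa using Complex.norm_add_mul_I x 1
    rw [hsqrt, sqrt_le_iff]
    constructor <;> nlinarith [sq_nonneg x]
  have hexp := pow_div_factorial_le_exp ((1 + x ^ 2) / 2) (by positivity) n
  calc ‖(x : ℂ) + I‖ ^ n ≤ (2 * ((1 + x ^ 2) / 2)) ^ n := by
        gcongr
        linarith
    _ = 2 ^ n * n.factorial * (((1 + x ^ 2) / 2) ^ n / n.factorial) := by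
        rw [mul_pow]
        field_simp
    _ ≤ 2 ^ n * n.factorial * exp ((1 + x ^ 2) / 2) := by gcongr

lemma norm_airyIntegrand_le (n : ℕ) (z x : ℝ) :
    ‖airyIntegrand n z x‖
      ≤ 2 ^ n * n.factorial * exp (5 / 6 - z) * exp (-(1 / 2) * x ^ 2) := by
  have hkernel : ‖airyKernel z (x + I)‖ = exp (-x ^ 2 + 1 / 3 - z) := by
    simpa using norm_airyKernel x 1 z
  rw [airyIntegrand, norm_mul, norm_pow, norm_mul, Complex.norm_I, one_mul, hkernel]
  calc ‖(x : ℂ) + I‖ ^ n * exp (-x ^ 2 + 1 / 3 - z)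
      ≤ 2 ^ n * n.factorial * exp ((1 + x ^ 2) / 2) * exp (-x ^ 2 + 1 / 3 - z) := by
        gcongr
        exact norm_ofReal_add_I_pow_le n x
    _ = 2 ^ n * n.factorial * exp (5 / 6 - z) * exp (-(1 / 2) * x ^ 2) := by
        rw [mul_assoc, mul_assoc _ (exp _), ← exp_add, ← exp_add]
        ring_nf

lemma integrable_const_mul_exp_neg_half_sq (c : ℝ) :
    Integrable fun x : ℝ => c * exp (-(1 / 2) * x ^ 2) :=
  (integrable_exp_neg_mul_sq one_half_pos).const_mul c

lemma integrable_airyIntegrand (n : ℕ) (z : ℝ) : Integrable (airyIntegrand n z) :=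
  (integrable_const_mul_exp_neg_half_sq _).mono'
    (continuous_airyIntegrand n z).aestronglyMeasurable
    (.of_forall (norm_airyIntegrand_le n z))

lemma norm_airyMoment_le (n : ℕ) (z : ℝ) :
    ‖airyMoment n z‖ ≤ 2 ^ n * n.factorial * exp (5 / 6 - z) * √(2 * π) := by
  have hgauss : ∫ x : ℝ, exp (-(1 / 2) * x ^ 2) = √(2 * π) := by
    rw [integral_gaussian]
    ring_nf
  rw [← hgauss, ← integral_const_mul]
  exact norm_integral_le_of_norm_le (integrable_const_mul_exp_neg_half_sq _)
    (.of_forall (norm_airyIntegrand_le n z))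

lemma hasDerivAt_airyIntegrand_param (n : ℕ) (z x : ℝ) :
    HasDerivAt (fun z => airyIntegrand n z x) (airyIntegrand (n + 1) z x) z := by
  unfold airyIntegrand airyKernel
  have hexponent : HasDerivAt (fun z : ℝ => I * (((x : ℂ) + I) ^ 3 / 3 + (x + I) * z))
      (I * ((x + I) * 1)) z :=
    ((Complex.ofRealCLM.hasDerivAt.const_mul _).const_add _).const_mul I
  exact (hexponent.cexp.const_mul _).congr_deriv (by ring)

lemma hasDerivAt_airyMoment (n : ℕ) (z : ℝ) :
    HasDerivAt (airyMoment n) (airyMoment (n + 1) z) z := by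
  refine (hasDerivAt_integral_of_dominated_loc_of_deriv_le (F := airyIntegrand n)
    (F' := airyIntegrand (n + 1)) (Ioi_mem_nhds (sub_one_lt z))
    (.of_forall fun y => (continuous_airyIntegrand n y).aestronglyMeasurable)
    (integrable_airyIntegrand n z) (continuous_airyIntegrand (n + 1) z).aestronglyMeasurable
    (.of_forall fun x y (hy : z - 1 < y) => ?_)
    (integrable_const_mul_exp_neg_half_sq
      (2 ^ (n + 1) * (n + 1).factorial * exp (5 / 6 - (z - 1))))
    (.of_forall fun x y _ => hasDerivAt_airyIntegrand_param n y x)).2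
  exact (norm_airyIntegrand_le (n + 1) y x).trans (by gcongr)

lemma hasDerivAt_airyIntegrand_zero (z x : ℝ) :
    HasDerivAt (airyIntegrand 0 z) (-I * (airyIntegrand 2 z x - z * airyIntegrand 0 z x)) x := by
  have hline : HasDerivAt (fun x : ℝ => (x : ℂ) + I) 1 x :=
    Complex.ofRealCLM.hasDerivAt.add_const _
  unfold airyIntegrand airyKernel
  simp only [pow_zero, one_mul]
  refine ((((hline.pow 3).div_const 3).add (hline.mul_const (z : ℂ))).const_mul
    I).cexp.congr_deriv ?_
  simp only [Pi.add_apply, Pi.pow_apply]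
  push_cast
  linear_combination (I * (x + I) ^ 2 *
    Complex.exp (I * ((x + I) ^ 3 / 3 + (x + I) * z))) * Complex.I_sq

lemma airyMoment_two (z : ℝ) : airyMoment 2 z = z * airyMoment 0 z := by
  have hint₀ := (integrable_airyIntegrand 0 z).const_mul (z : ℂ)
  have hint₂ := integrable_airyIntegrand 2 z
  have htotal := integral_eq_zero_of_hasDerivAt_of_integrable (hasDerivAt_airyIntegrand_zero z)
    ((hint₂.sub hint₀).const_mul (-I)) (integrable_airyIntegrand 0 z)
  rw [integral_const_mul, integral_sub hint₂ hint₀, integral_const_mul] at htotal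
  exact sub_eq_zero.mp ((mul_eq_zero.mp htotal).resolve_left (neg_ne_zero.mpr Complex.I_ne_zero))

/-! ### The Airy function as a contour integral -/

lemma tendsto_integral_airyKernel (z : ℝ) :
    Tendsto (fun R : ℝ => ∫ x in (-R)..R, airyKernel z x) atTop (𝓝 (airyMoment 0 z)) := by
  have hline (x : ℝ) : airyKernel z (x + (1 : ℝ) * I) = airyIntegrand 0 z x := by
    simp [airyIntegrand]
  have hlim := tendsto_intervalIntegral_of_tendsto_vertical_zero (differentiable_airyKernel z)
    (h := 1) (by simpa only [hline] using integrable_airyIntegrand 0 z)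
    (tendsto_integral_airyKernel_vertical z zero_le_one)
  simpa only [hline, airyMoment] using hlim

lemma integral_airyKernel_neg_self (z R : ℝ) :
    ∫ x in (-R)..R, airyKernel z x
      = ((2 * ∫ ξ in (0 : ℝ)..R, cos (ξ ^ 3 / 3 + ξ * z) : ℝ) : ℂ) := by
  have hcont : Continuous fun x : ℝ => airyKernel z x :=
    (differentiable_airyKernel z).continuous.comp Complex.continuous_ofReal
  rw [intervalIntegral_neg_self_eq (hcont.intervalIntegrable _ _)]
  simp only [Complex.ofReal_neg, airyKernel_add_airyKernel_neg]
  rw [intervalIntegral.integral_ofReal, intervalIntegral.integral_const_mul]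

lemma Ai_eq (z : ℝ) : Ai z = 1 / (2 * π) * (airyMoment 0 z).re := by
  refine Tendsto.limUnder_eq ?_
  have hre := (Complex.continuous_re.tendsto _).comp (tendsto_integral_airyKernel z)
  refine (hre.const_mul (1 / (2 * π))).congr fun R => ?_
  rw [Function.comp_apply, integral_airyKernel_neg_self, Complex.ofReal_re]
  field_simp

lemma hasDerivAt_re_airyMoment (n : ℕ) (z : ℝ) :
    HasDerivAt (fun z => 1 / (2 * π) * (airyMoment n z).re)
      (1 / (2 * π) * (airyMoment (n + 1) z).re) z :=
  (Complex.reCLM.hasFDerivAt.comp_hasDerivAt z (hasDerivAt_airyMoment n z)).const_mul _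

lemma deriv_Ai (z : ℝ) : deriv Ai z = 1 / (2 * π) * (airyMoment 1 z).re := by
  rw [funext Ai_eq]
  exact (hasDerivAt_re_airyMoment 0 z).deriv

lemma differentiable_Ai : Differentiable ℝ Ai := by
  rw [funext Ai_eq]
  exact fun z => (hasDerivAt_re_airyMoment 0 z).differentiableAt

lemma hasDerivAt_deriv_Ai (z : ℝ) : HasDerivAt (deriv Ai) (z * Ai z) z := by
  rw [funext deriv_Ai, Ai_eq]
  refine (hasDerivAt_re_airyMoment 1 z).congr_deriv ?_
  rw [airyMoment_two, Complex.re_ofReal_mul]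
  ring

lemma abs_deriv_Ai_le_exp (z : ℝ) : |deriv Ai z| ≤ exp (5 / 6 - z) := by
  have hsqrt : √(2 * π) ≤ π := sqrt_le_iff.mpr ⟨pi_pos.le, by nlinarith [pi_gt_three]⟩
  have hmoment : |(airyMoment 1 z).re| ≤ 2 * exp (5 / 6 - z) * √(2 * π) := by
    simpa using (Complex.abs_re_le_norm _).trans (norm_airyMoment_le 1 z)
  calc |deriv Ai z| = 1 / (2 * π) * |(airyMoment 1 z).re| := by
        rw [deriv_Ai, abs_mul, abs_of_pos (by positivity)]
    _ ≤ 1 / (2 * π) * (2 * exp (5 / 6 - z) * π) := by gcongr; exact hmoment.trans (by gcongr)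
    _ = exp (5 / 6 - z) := by field_simp

end ContourIntegral

/-! ### Growth of solutions of the Airy equation -/

lemma antitoneOn_mul_exp_neg_of_deriv_le_mul {D : Set ℝ} (hD : Convex ℝ D) {f f' k k' : ℝ → ℝ}
    (hf : ∀ x ∈ D, HasDerivAt f (f' x) x) (hk : ∀ x ∈ D, HasDerivAt k (k' x) x)
    (hle : ∀ x ∈ D, f' x ≤ k' x * f x) :
    AntitoneOn (fun x => f x * exp (-k x)) D := by
  have hderiv (x) (hx : x ∈ D) : HasDerivAt (fun x => f x * exp (-k x))
      ((f' x - k' x * f x) * exp (-k x)) x :=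
    ((hf x hx).mul (hk x hx).neg.exp).congr_deriv (by simp only [Pi.neg_apply]; ring)
  refine antitoneOn_of_hasDerivWithinAt_nonpos hD
    (fun x hx => (hderiv x hx).continuousAt.continuousWithinAt)
    (fun x hx => (hderiv x (interior_subset hx)).hasDerivWithinAt) fun x hx => ?_
  exact mul_nonpos_of_nonpos_of_nonneg (sub_nonpos.mpr (hle x (interior_subset hx)))
    (exp_pos _).le

/-- The energy at `x = -s²` of a solution of the Airy equation with value `w` and derivative `v`
there. The cross term cancels the leading terms of the derivative in `s` of `s w² + v² / s`. -/
noncomputable def airyEnergy (s w v : ℝ) : ℝ :=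
  s * w ^ 2 + s⁻¹ * v ^ 2 - w * v / (2 * s ^ 3)

lemma three_quarters_mul_le_airyEnergy {s : ℝ} (hs : 1 ≤ s) (w v : ℝ) :
    3 / 4 * (s * w ^ 2 + s⁻¹ * v ^ 2) ≤ airyEnergy s w v := by
  have hamgm : 2 * |w * v| ≤ s * w ^ 2 + s⁻¹ * v ^ 2 := by
    simpa only [abs_mul, sq_abs, mul_assoc] using
      two_mul_le_add_mul_sq (a := |w|) (b := |v|) (zero_lt_one.trans_le hs)
  have hcross : w * v / (2 * s ^ 3) ≤ |w * v| / 2 := by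
    have hcube : 1 ≤ s ^ 3 := one_le_pow₀ hs
    gcongr
    · exact le_abs_self _
    · linarith
  unfold airyEnergy
  linarith

lemma mul_le_airyEnergy {s : ℝ} (hs : 1 ≤ s) (w v : ℝ) :
    3 / 2 * (w * v) ≤ airyEnergy s w v := by
  have hamgm := two_mul_le_add_mul_sq (a := w) (b := v) (zero_lt_one.trans_le hs)
  have hcoercive := three_quarters_mul_le_airyEnergy hs w v
  linarith

lemma sq_le_airyEnergy {s : ℝ} (hs : 1 ≤ s) (w v : ℝ) :
    v ^ 2 ≤ 4 / 3 * airyEnergy s w v * s := by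
  have hs₀ : 0 < s := zero_lt_one.trans_le hs
  have hcoercive := three_quarters_mul_le_airyEnergy hs w v
  have hw : 0 ≤ s * w ^ 2 := by positivity
  rw [← div_le_iff₀ hs₀, div_eq_inv_mul]
  linarith

lemma airyEnergy_nonneg {s : ℝ} (hs : 1 ≤ s) (w v : ℝ) : 0 ≤ airyEnergy s w v := by
  have : 0 < s := zero_lt_one.trans_le hs
  exact (by positivity : 0 ≤ 3 / 4 * (s * w ^ 2 + s⁻¹ * v ^ 2)).trans
    (three_quarters_mul_le_airyEnergy hs w v)

lemma hasDerivAt_airyEnergy {w v : ℝ → ℝ} {s : ℝ} (hs : s ≠ 0)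
    (hw : HasDerivAt w (-2 * s * v s) s) (hv : HasDerivAt v (2 * s ^ 3 * w s) s) :
    HasDerivAt (fun r => airyEnergy r (w r) (v r)) (3 / 2 * (w s * v s) / s ^ 4) s := by
  unfold airyEnergy
  have hcube : HasDerivAt (fun r : ℝ => 2 * r ^ 3) (2 * (3 * s ^ 2)) s := by
    simpa using (hasDerivAt_pow 3 s).const_mul 2
  refine ((((hasDerivAt_id s).mul (hw.pow 2)).add ((hasDerivAt_inv hs).mul (hv.pow 2))).sub
    ((hw.mul hv).div hcube (by positivity))).congr_deriv ?_
  simp only [id, Pi.mul_apply, Pi.pow_apply]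
  push_cast
  field_simp
  ring

lemma airyEnergy_le_of_hasDerivAt {w v : ℝ → ℝ}
    (hw : ∀ s, 1 ≤ s → HasDerivAt w (-2 * s * v s) s)
    (hv : ∀ s, 1 ≤ s → HasDerivAt v (2 * s ^ 3 * w s) s) {s : ℝ} (hs : 1 ≤ s) :
    airyEnergy s (w s) (v s) ≤ airyEnergy 1 (w 1) (v 1) * exp (1 / 3) := by
  have hweight (r : ℝ) (hr : r ∈ Ici (1 : ℝ)) :
      HasDerivAt (fun r => -(1 / 3 * (r ^ 3)⁻¹)) (r ^ 4)⁻¹ r := by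
    have hr₀ : r ≠ 0 := (zero_lt_one.trans_le hr).ne'
    refine (((hasDerivAt_pow 3 r).inv (by positivity)).const_mul (1 / 3)).neg.congr_deriv ?_
    push_cast
    field_simp
  have hanti := antitoneOn_mul_exp_neg_of_deriv_le_mul (convex_Ici 1)
    (fun r (hr : 1 ≤ r) => hasDerivAt_airyEnergy (zero_lt_one.trans_le hr).ne' (hw r hr) (hv r hr))
    hweight fun r (hr : 1 ≤ r) => by
      rw [div_eq_inv_mul]
      gcongr
      exact mul_le_airyEnergy hr _ _
  have : 0 < s := zero_lt_one.trans_le hs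
  calc airyEnergy s (w s) (v s)
      ≤ airyEnergy s (w s) (v s) * exp (1 / 3 * (s ^ 3)⁻¹) :=
        le_mul_of_one_le_right (airyEnergy_nonneg hs _ _) (one_le_exp (by positivity))
    _ ≤ airyEnergy 1 (w 1) (v 1) * exp (1 / 3) := by
        simpa using hanti self_mem_Ici hs hs

lemma exists_abs_deriv_le_rpow_of_airy_equation {y y' : ℝ → ℝ}
    (hy : ∀ x ≤ -1, HasDerivAt y (y' x) x) (hy' : ∀ x ≤ -1, HasDerivAt y' (x * y x) x) :
    ∃ K : ℝ, 0 ≤ K ∧ ∀ x ≤ -1, |y' x| ≤ K * (-x) ^ (1 / 4 : ℝ) := by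
  have hsubst (s : ℝ) : HasDerivAt (fun s : ℝ => -s ^ 2) (-2 * s) s :=
    (hasDerivAt_pow 2 s).neg.congr_deriv (by norm_num)
  have hle (s : ℝ) (hs : 1 ≤ s) : -s ^ 2 ≤ -1 := neg_le_neg (one_le_pow₀ hs)
  have hw (s : ℝ) (hs : 1 ≤ s) : HasDerivAt (fun s => y (-s ^ 2)) (-2 * s * y' (-s ^ 2)) s :=
    ((hy _ (hle s hs)).comp s (hsubst s)).congr_deriv (by ring)
  have hv (s : ℝ) (hs : 1 ≤ s) :
      HasDerivAt (fun s => y' (-s ^ 2)) (2 * s ^ 3 * y (-s ^ 2)) s :=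
    ((hy' _ (hle s hs)).comp s (hsubst s)).congr_deriv (by ring)
  let A : ℝ := 4 / 3 * (airyEnergy 1 (y (-1 ^ 2)) (y' (-1 ^ 2)) * exp (1 / 3))
  refine ⟨√A, sqrt_nonneg A, fun x hx => ?_⟩
  have hx₀ : 0 ≤ -x := by linarith
  have hs : 1 ≤ √(-x) := one_le_sqrt.mpr (by linarith)
  have hsq : y' x ^ 2 ≤ A * √(-x) := by
    have hbound := (sq_le_airyEnergy hs _ _).trans (mul_le_mul_of_nonneg_right
      (mul_le_mul_of_nonneg_left (airyEnergy_le_of_hasDerivAt hw hv hs) (by norm_num))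
      (sqrt_nonneg _))
    simpa only [sq_sqrt hx₀, neg_neg] using hbound
  calc |y' x| ≤ √(A * √(-x)) := abs_le_sqrt hsq
    _ = √A * √(√(-x)) := sqrt_mul' _ (sqrt_nonneg _)
    _ = √A * (-x) ^ (1 / 4 : ℝ) := by
        rw [sqrt_eq_rpow (√(-x)), sqrt_eq_rpow (-x), ← rpow_mul hx₀]
        norm_num

/-- The Airy function is differentiable and there is `C > 0` with
`|Ai' x| ≤ C (1+|x|)^{1/4}` for every real `x`. -/
theorem airy_derivative_growth_bound :
    Differentiable ℝ Ai ∧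
      ∃ C : ℝ, 0 < C ∧ ∀ x : ℝ, |deriv Ai x| ≤ C * (1 + |x|) ^ ((1/4) : ℝ) := by
  refine ⟨differentiable_Ai, ?_⟩
  obtain ⟨K, hK, hleft⟩ := exists_abs_deriv_le_rpow_of_airy_equation
    (fun x _ => (differentiable_Ai x).hasDerivAt) (fun x _ => hasDerivAt_deriv_Ai x)
  refine ⟨exp (11 / 6) + K, by positivity, fun x => ?_⟩
  rw [add_mul]
  rcases le_total (-1) x with hx | hx
  · have hone : 1 ≤ (1 + |x|) ^ ((1/4) : ℝ) :=
      one_le_rpow (le_add_of_nonneg_right (abs_nonneg x)) (by norm_num)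
    calc |deriv Ai x| ≤ exp (5 / 6 - x) := abs_deriv_Ai_le_exp x
      _ ≤ exp (11 / 6) := exp_le_exp.mpr (by linarith)
      _ ≤ exp (11 / 6) * (1 + |x|) ^ ((1/4) : ℝ) := le_mul_of_one_le_right (exp_pos _).le hone
      _ ≤ _ := le_add_of_nonneg_right (by positivity)
  · calc |deriv Ai x| ≤ K * (-x) ^ (1 / 4 : ℝ) := hleft x hx
      _ ≤ K * (1 + |x|) ^ ((1/4) : ℝ) := by
        gcongr
        · linarith
        · linarith [neg_le_abs x]
      _ ≤ _ := le_add_of_nonneg_left (by positivity)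
end

section
/- Let φ be a Schwartz function on ℝ and for t > 0 define w(t,x) = (3t)^{−1/3} ∫_ℝ Ai( (x−y)/(3t)^{1/3} ) φ(y) dy. Then w is smooth in (t,x) on (0,∞)×ℝ, satisfies the linear KdV (Airy) equation ∂_t w + ∂_x³ w = 0 there, and w(t,·) → φ in L²(ℝ) as t → 0⁺. -/
open MeasureTheory Filter Real Set
open scoped ENNReal Topology

/-- `w t x = (3t)^{-1/3} ∫ Ai ((x-y)/(3t)^{1/3}) φ(y) dy`. -/
noncomputable def w (φ : ℝ → ℂ) (t x : ℝ) : ℂ :=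
  ((3 * t) ^ (1/3 : ℝ))⁻¹ • ∫ y : ℝ, (Ai ((x - y) / (3 * t) ^ (1/3 : ℝ)) : ℂ) * φ y

/-!
On the Fourier side `w φ t` is `exp (i t (2πη)³) 𝓕 φ η`. The Airy integral converges only
conditionally, so this is proved through its truncations: the first-derivative test for oscillatory
integrals gives their convergence and a bound `|z| + 5` uniform in the truncation height, enough to
dominate the convolution with a function with finite first moment. A truncated kernel is the inverse
Fourier transform of the symbol cut off to a bounded interval, where Fubini applies.

The resulting representation is a superposition of the plane waves `exp (i (t k³ + x k))`, with
`k = 2πη` and rapidly decreasing amplitudes, so it may be differentiated under the integral sign,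
and `i k³ + (i k)³ = 0` is the differential equation. Convergence to the initial datum follows from
Plancherel and dominated convergence, as the symbol has modulus one and tends to `1` pointwise.
-/

open scoped FourierTransform SchwartzMap

/-! ### Oscillatory integrals over intervals -/

lemma norm_integral_smul_deriv_le {E : Type*} [NormedAddCommGroup E] [NormedSpace ℝ E]
    [CompleteSpace E] {u u' : ℝ → ℝ} {v v' : ℝ → E} {a b C : ℝ} (hab : a ≤ b)
    (hu : ∀ x ∈ uIcc a b, HasDerivAt u (u' x) x) (hv : ∀ x ∈ uIcc a b, HasDerivAt v (v' x) x)
    (hu' : IntervalIntegrable u' volume a b) (hv' : IntervalIntegrable v' volume a b)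
    (hub : 0 ≤ u b) (hu'_nonpos : ∀ x ∈ Icc a b, u' x ≤ 0) (hC : ∀ x ∈ Icc a b, ‖v x‖ ≤ C) :
    ‖∫ x in a..b, u x • v' x‖ ≤ 2 * C * u a := by
  have ftc : ∫ x in a..b, u' x = u b - u a := intervalIntegral.integral_eq_sub_of_hasDerivAt hu hu'
  have hua : u b ≤ u a := by
    have := intervalIntegral.integral_nonneg (μ := volume) hab
      fun x hx => neg_nonneg.2 (hu'_nonpos x hx)
    rw [intervalIntegral.integral_neg, ftc] at this
    linarith
  have remainder : ‖∫ x in a..b, u' x • v x‖ ≤ C * (u a - u b) := calc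
    ‖∫ x in a..b, u' x • v x‖ ≤ ∫ x in a..b, C * -u' x := by
      refine intervalIntegral.norm_integral_le_of_norm_le hab (.of_forall fun x hx => ?_)
        (hu'.neg.const_mul C)
      have hx' := Ioc_subset_Icc_self hx
      rw [norm_smul, Real.norm_of_nonpos (hu'_nonpos x hx'), mul_comm]
      exact mul_le_mul_of_nonneg_right (hC x hx') (neg_nonneg.2 (hu'_nonpos x hx'))
    _ = C * (u a - u b) := by
      rw [intervalIntegral.integral_const_mul, intervalIntegral.integral_neg, ftc, neg_sub]
  have endpoint : ∀ x ∈ Icc a b, 0 ≤ u x → ‖u x • v x‖ ≤ C * u x := fun x hx h0 => by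
    rw [norm_smul, Real.norm_of_nonneg h0, mul_comm]
    exact mul_le_mul_of_nonneg_right (hC x hx) h0
  calc ‖∫ x in a..b, u x • v' x‖
      = ‖u b • v b - u a • v a - ∫ x in a..b, u' x • v x‖ := by
        rw [intervalIntegral.integral_smul_deriv_eq_deriv_smul hu hv hu' hv']
    _ ≤ ‖u b • v b‖ + ‖u a • v a‖ + ‖∫ x in a..b, u' x • v x‖ :=
        (norm_sub_le _ _).trans (add_le_add_left (norm_sub_le _ _) _)
    _ ≤ C * u b + C * u a + C * (u a - u b) := by
        gcongr
        · exact endpoint b (right_mem_Icc.2 hab) hub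
        · exact endpoint a (left_mem_Icc.2 hab) (hub.trans hua)
    _ = 2 * C * u a := by ring

lemma abs_integral_cos_le_two_div_deriv {p p' p'' : ℝ → ℝ} {a b : ℝ} (hab : a ≤ b)
    (hp : ∀ x ∈ uIcc a b, HasDerivAt p (p' x) x) (hp' : ∀ x ∈ uIcc a b, HasDerivAt p' (p'' x) x)
    (hp'' : ContinuousOn p'' (uIcc a b)) (hp'_pos : ∀ x ∈ uIcc a b, 0 < p' x)
    (hp''_nonneg : ∀ x ∈ Icc a b, 0 ≤ p'' x) :
    |∫ x in a..b, cos (p x)| ≤ 2 / p' a := by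
  have hcont : ContinuousOn p (uIcc a b) := fun x hx => (hp x hx).continuousAt.continuousWithinAt
  have hcont' : ContinuousOn p' (uIcc a b) := fun x hx => (hp' x hx).continuousAt.continuousWithinAt
  have hparts : ∫ x in a..b, cos (p x) = ∫ x in a..b, (p' x)⁻¹ • (cos (p x) * p' x) :=
    intervalIntegral.integral_congr fun x hx => by
      have := (hp'_pos x hx).ne'
      simp only [smul_eq_mul]
      field_simp
  rw [hparts, ← Real.norm_eq_abs]
  refine (norm_integral_smul_deriv_le (C := 1) hab (fun x hx => (hp' x hx).inv (hp'_pos x hx).ne')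
    (fun x hx => (hp x hx).sin) ?_ ?_ (inv_nonneg.2 (hp'_pos b right_mem_uIcc).le) ?_
    fun x _ => abs_sin_le_one _).trans_eq
      (by rw [mul_one, Pi.inv_apply, ← div_eq_mul_inv])
  · exact (hp''.neg.div (hcont'.pow 2)
      fun x hx => (pow_pos (hp'_pos x hx) 2).ne').intervalIntegrable
  · exact ((continuous_cos.comp_continuousOn hcont).mul hcont').intervalIntegrable
  · exact fun x hx => div_nonpos_of_nonpos_of_nonneg (neg_nonpos.2 (hp''_nonneg x hx)) (sq_nonneg _)

lemma integral_cexp_eq_two_mul_integral_cos {θ : ℝ → ℝ} (hodd : θ.Odd) (hcont : Continuous θ)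
    (R : ℝ) :
    ∫ ξ in (-R)..R, Complex.exp (θ ξ * Complex.I) = (2 * ∫ ξ in (0 : ℝ)..R, cos (θ ξ) : ℝ) := by
  have hint : ∀ a b, IntervalIntegrable (fun ξ => Complex.exp (θ ξ * Complex.I)) volume a b :=
    fun a b => Continuous.intervalIntegrable (by fun_prop) a b
  have hint_neg : IntervalIntegrable (fun ξ => Complex.exp (θ (-ξ) * Complex.I)) volume 0 R :=
    Continuous.intervalIntegrable (by fun_prop) 0 R
  have hreflect : ∫ ξ in (-R)..0, Complex.exp (θ ξ * Complex.I) =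
      ∫ ξ in (0 : ℝ)..R, Complex.exp (θ (-ξ) * Complex.I) := by
    simpa using (intervalIntegral.integral_comp_neg (a := 0) (b := R)
      fun ξ => Complex.exp (θ ξ * Complex.I)).symm
  rw [← intervalIntegral.integral_add_adjacent_intervals (hint (-R) 0) (hint 0 R), hreflect,
    ← intervalIntegral.integral_add hint_neg (hint 0 R), ← intervalIntegral.integral_const_mul,
    ← intervalIntegral.integral_ofReal]
  congr 1 with ξ
  rw [hodd ξ]
  push_cast
  rw [Complex.two_cos, add_comm]

/-! ### Truncations of the Airy integral -/

/-- The Airy integral truncated at height `R`, so that `Ai z = lim truncAi R z` as `R → ∞`. -/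
noncomputable def truncAi (R z : ℝ) : ℝ :=
  (1 / π) * ∫ ξ in (0 : ℝ)..R, cos (ξ ^ 3 / 3 + ξ * z)

lemma intervalIntegrable_cos_airyPhase (z a b : ℝ) :
    IntervalIntegrable (fun ξ : ℝ => cos (ξ ^ 3 / 3 + ξ * z)) volume a b :=
  Continuous.intervalIntegrable (by fun_prop) a b

lemma continuous_truncAi (R : ℝ) : Continuous (truncAi R) :=
  continuous_const.mul
    (intervalIntegral.continuous_parametric_intervalIntegral_of_continuous' (by fun_prop) 0 R)

lemma abs_integral_cos_airyPhase_le {z a b : ℝ} (ha : 1 + |z| ≤ a) (hab : a ≤ b) :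
    |∫ ξ in a..b, cos (ξ ^ 3 / 3 + ξ * z)| ≤ 4 / a ^ 2 := by
  have ha0 : 0 < a := by linarith [abs_nonneg z]
  have hderiv_ge : ∀ ξ, a ≤ ξ → ξ ^ 2 / 2 ≤ ξ ^ 2 + z := fun ξ hξ => by
    nlinarith [neg_abs_le z, abs_nonneg z]
  have hderiv_pos : ∀ ξ, a ≤ ξ → 0 < ξ ^ 2 + z := fun ξ hξ => by
    have : 0 < ξ ^ 2 := pow_pos (ha0.trans_le hξ) 2
    linarith [hderiv_ge ξ hξ]
  calc |∫ ξ in a..b, cos (ξ ^ 3 / 3 + ξ * z)| ≤ 2 / (a ^ 2 + z) := by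
        refine abs_integral_cos_le_two_div_deriv (p'' := fun ξ => 2 * ξ) hab (fun ξ _ => ?_)
          (fun ξ _ => ?_) (by fun_prop) (fun ξ hξ => hderiv_pos ξ (uIcc_of_le hab ▸ hξ).1)
          fun ξ hξ => by linarith [hξ.1]
        · simpa using ((hasDerivAt_pow 3 ξ).div_const 3).fun_add ((hasDerivAt_id ξ).mul_const z)
        · simpa using (hasDerivAt_pow 2 ξ).add_const z
    _ ≤ 2 / (a ^ 2 / 2) := by gcongr; exact hderiv_ge a le_rfl
    _ = 4 / a ^ 2 := by ring

lemma tendsto_truncAi (z : ℝ) : Tendsto (truncAi · z) atTop (𝓝 (Ai z)) := by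
  have hcauchy : CauchySeq fun R : ℝ => ∫ ξ in (0 : ℝ)..R, cos (ξ ^ 3 / 3 + ξ * z) := by
    rw [Metric.cauchySeq_iff']
    intro ε hε
    have hlim : Tendsto (fun a : ℝ => 4 / a ^ 2) atTop (𝓝 0) :=
      tendsto_const_nhds.div_atTop (tendsto_pow_atTop two_ne_zero)
    obtain ⟨N, hNε, hNz⟩ :=
      ((hlim.eventually_lt_const hε).and (eventually_ge_atTop (1 + |z|))).exists
    refine ⟨N, fun R hR => ?_⟩
    rw [Real.dist_eq, intervalIntegral.integral_interval_sub_left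
      (intervalIntegrable_cos_airyPhase z 0 R) (intervalIntegrable_cos_airyPhase z 0 N)]
    exact (abs_integral_cos_airyPhase_le hNz hR).trans_lt hNε
  obtain ⟨l, hl⟩ := cauchySeq_tendsto_of_complete hcauchy
  exact tendsto_nhds_limUnder ⟨_, hl.const_mul (1 / π)⟩

lemma abs_truncAi_le {R : ℝ} (hR : 0 ≤ R) (z : ℝ) : |truncAi R z| ≤ |z| + 5 := by
  have trivial_bound : ∀ M : ℝ, 0 ≤ M → |∫ ξ in (0 : ℝ)..M, cos (ξ ^ 3 / 3 + ξ * z)| ≤ M := by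
    intro M hM
    simpa [abs_of_nonneg hM] using intervalIntegral.norm_integral_le_of_norm_le_const
      (a := 0) (b := M) (C := 1) (f := fun ξ : ℝ => cos (ξ ^ 3 / 3 + ξ * z))
      fun ξ _ => abs_cos_le_one _
  have hz := abs_nonneg z
  have hintegral : |∫ ξ in (0 : ℝ)..R, cos (ξ ^ 3 / 3 + ξ * z)| ≤ |z| + 5 := by
    rcases le_total R (1 + |z|) with hRz | hRz
    · linarith [trivial_bound R hR]
    · rw [← intervalIntegral.integral_add_adjacent_intervals
        (intervalIntegrable_cos_airyPhase z 0 (1 + |z|))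
        (intervalIntegrable_cos_airyPhase z (1 + |z|) R)]
      have htail : 4 / (1 + |z|) ^ 2 ≤ 4 := div_le_self (by norm_num) (by nlinarith)
      linarith [abs_add_le (∫ ξ in (0 : ℝ)..(1 + |z|), cos (ξ ^ 3 / 3 + ξ * z))
        (∫ ξ in (1 + |z|)..R, cos (ξ ^ 3 / 3 + ξ * z)), trivial_bound (1 + |z|) (by positivity),
        abs_integral_cos_airyPhase_le le_rfl hRz]
  rw [truncAi, abs_mul, abs_of_pos (by positivity)]
  exact (mul_le_of_le_one_left (abs_nonneg _)
    ((div_le_one pi_pos).2 (by linarith [pi_gt_three]))).trans hintegral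

lemma tendsto_integral_truncAi_smul {α E : Type*} [MeasurableSpace α] {μ : Measure α}
    [NormedAddCommGroup E] [NormedSpace ℝ E] {g : α → ℝ} {f : α → E}
    (hg : AEStronglyMeasurable g μ) (hf : Integrable f μ) (hgf : Integrable (g • f) μ) :
    Tendsto (fun R => ∫ a, truncAi R (g a) • f a ∂μ) atTop (𝓝 (∫ a, Ai (g a) • f a ∂μ)) := by
  refine tendsto_integral_filter_of_dominated_convergence (fun a => ‖g a • f a‖ + 5 * ‖f a‖)
    (.of_forall fun R => ((continuous_truncAi R).comp_aestronglyMeasurable hg).smul hf.1) ?_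
    (hgf.norm.add (hf.norm.const_mul 5))
    (.of_forall fun a => (tendsto_truncAi (g a)).smul_const (f a))
  filter_upwards [eventually_ge_atTop 0] with R hR
  refine .of_forall fun a => ?_
  calc ‖truncAi R (g a) • f a‖ = |truncAi R (g a)| * ‖f a‖ := norm_smul _ _
    _ ≤ (|g a| + 5) * ‖f a‖ := by gcongr; exact abs_truncAi_le hR (g a)
    _ = ‖g a • f a‖ + 5 * ‖f a‖ := by rw [norm_smul, Real.norm_eq_abs, add_mul]

/-! ### The Airy kernel as a Fourier multiplier -/

/-- The symbol `exp (i t (2πη)³)` of the propagator `exp (-t ∂ₓ³)`, for the normalisation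
`𝓕 f η = ∫ exp (-2πi x η) f x` of the Fourier transform. -/
noncomputable def airyMultiplier (t η : ℝ) : ℂ :=
  Complex.exp ((t * (2 * π * η) ^ 3 : ℝ) * Complex.I)

lemma norm_airyMultiplier (t η : ℝ) : ‖airyMultiplier t η‖ = 1 :=
  Complex.norm_exp_ofReal_mul_I _

lemma continuous_airyMultiplier (t : ℝ) : Continuous (airyMultiplier t) := by
  unfold airyMultiplier
  fun_prop

lemma ofReal_inv_mul_truncAi_div {s ρ : ℝ} (hs : 0 < s) (hρ : 0 ≤ ρ) (z : ℝ) :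
    ((s⁻¹ * truncAi (2 * π * s * ρ) (z / s) : ℝ) : ℂ) =
      𝓕⁻ ((Ioc (-ρ) ρ).indicator (airyMultiplier (s ^ 3 / 3))) z := by
  have hodd : (fun ξ : ℝ => ξ ^ 3 / 3 + ξ * (z / s)).Odd := fun ξ => by ring
  have hphase : ∀ η : ℝ, Complex.exp ((2 * π * (z * η) : ℝ) * Complex.I) *
      airyMultiplier (s ^ 3 / 3) η =
      Complex.exp (((2 * π * s * η) ^ 3 / 3 + 2 * π * s * η * (z / s) : ℝ) * Complex.I) := by
    intro η
    rw [airyMultiplier, ← Complex.exp_add, ← add_mul, ← Complex.ofReal_add]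
    congr 3
    field_simp
    ring
  have hsubst := intervalIntegral.integral_comp_mul_left (a := -ρ) (b := ρ)
    (fun ξ : ℝ => Complex.exp ((ξ ^ 3 / 3 + ξ * (z / s) : ℝ) * Complex.I))
    (c := 2 * π * s) (by positivity)
  symm
  calc 𝓕⁻ ((Ioc (-ρ) ρ).indicator (airyMultiplier (s ^ 3 / 3))) z
      = ∫ η in (-ρ)..ρ, Complex.exp ((2 * π * (z * η) : ℝ) * Complex.I) *
          airyMultiplier (s ^ 3 / 3) η := by
        rw [Real.fourierInv_eq', intervalIntegral.integral_of_le (by linarith),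
          ← integral_indicator measurableSet_Ioc]
        congr 1 with η
        simp only [indicator_mul_right, smul_eq_mul, RCLike.inner_apply, conj_trivial]
    _ = (2 * π * s)⁻¹ • ∫ ξ in (-(2 * π * s * ρ))..(2 * π * s * ρ),
          Complex.exp ((ξ ^ 3 / 3 + ξ * (z / s) : ℝ) * Complex.I) := by
        simp only [hphase, hsubst, mul_neg]
    _ = ((s⁻¹ * truncAi (2 * π * s * ρ) (z / s) : ℝ) : ℂ) := by
        rw [integral_cexp_eq_two_mul_integral_cos hodd (by fun_prop), truncAi, Complex.real_smul,
          ← Complex.ofReal_mul]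
        congr 1
        field_simp

section FourierInversion

variable {V F : Type*} [NormedAddCommGroup V] [InnerProductSpace ℝ V] [FiniteDimensional ℝ V]
  [MeasurableSpace V] [BorelSpace V] [NormedAddCommGroup F] [NormedSpace ℂ F]

lemma integral_fourierInv_sub_smul [CompleteSpace F] {m : V → ℂ} {f : V → F} (hm : Integrable m)
    (hf : Integrable f) (x : V) :
    ∫ y, 𝓕⁻ m (x - y) • f y = 𝓕⁻ (fun η => m η • 𝓕 f η) x := by
  have hmod : Integrable fun η => Real.fourierChar (inner ℝ η x) • m η := by
    simpa using (Real.fourierIntegral_convergent_iff (-x)).2 hm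
  calc ∫ y, 𝓕⁻ m (x - y) • f y
      = ∫ y, 𝓕 (fun η => Real.fourierChar (inner ℝ η x) • m η) y • f y := by
        congr 1 with y
        rw [Real.fourierInv_eq, Real.fourier_eq]
        simp only [sub_eq_neg_add, inner_add_right, inner_neg_right, AddChar.map_add_eq_mul,
          mul_smul]
    _ = ∫ η, (Real.fourierChar (inner ℝ η x) • m η) • 𝓕 f η := by
        simpa only [flip_innerₗ] using! VectorFourier.integral_fourierIntegral_smul_eq_flip
          (L := innerₗ V) Real.continuous_fourierChar continuous_inner hmod hf
    _ = 𝓕⁻ (fun η => m η • 𝓕 f η) x := by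
        simp only [Real.fourierInv_eq, smul_assoc]

lemma tendsto_fourierInv_indicator {ι : Type*} {l : Filter ι} [l.IsCountablyGenerated]
    {s : ι → Set V} (hs : AECover volume l s) {f : V → F} (hf : Integrable f) (x : V) :
    Tendsto (fun i => 𝓕⁻ ((s i).indicator f) x) l (𝓝 (𝓕⁻ f x)) := by
  have hmod : Integrable fun η => Real.fourierChar (inner ℝ η x) • f η := by
    simpa using (Real.fourierIntegral_convergent_iff (-x)).2 hf
  simp only [Real.fourierInv_eq]
  refine (hs.integral_tendsto_of_countably_generated hmod).congr fun i => ?_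
  rw [← integral_indicator (hs.measurableSet i)]
  simp only [indicator_smul]

lemma inv_smul_integral_truncAi_smul [CompleteSpace F] {s ρ : ℝ} (hs : 0 < s) (hρ : 0 ≤ ρ)
    {f : ℝ → F} (hf : Integrable f) (x : ℝ) :
    s⁻¹ • ∫ y, truncAi (2 * π * s * ρ) ((x - y) / s) • f y =
      𝓕⁻ ((Ioc (-ρ) ρ).indicator fun η => airyMultiplier (s ^ 3 / 3) η • 𝓕 f η) x := by
  have hm : Integrable ((Ioc (-ρ) ρ).indicator (airyMultiplier (s ^ 3 / 3))) :=
    (continuous_airyMultiplier _).integrableOn_Ioc.integrable_indicator measurableSet_Ioc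
  calc s⁻¹ • ∫ y, truncAi (2 * π * s * ρ) ((x - y) / s) • f y
      = ∫ y, 𝓕⁻ ((Ioc (-ρ) ρ).indicator (airyMultiplier (s ^ 3 / 3))) (x - y) • f y := by
        simp only [← integral_smul, smul_smul, ← ofReal_inv_mul_truncAi_div hs hρ,
          Complex.coe_smul]
    _ = 𝓕⁻ ((Ioc (-ρ) ρ).indicator fun η => airyMultiplier (s ^ 3 / 3) η • 𝓕 f η) x := by
        rw [integral_fourierInv_sub_smul hm hf]
        simp only [← indicator_smul_left]

lemma inv_smul_integral_Ai_smul [CompleteSpace F] {s : ℝ} (hs : 0 < s) {f : ℝ → F}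
    (hf : Integrable f) (hf' : Integrable fun y => y • f y) (hfhat : Integrable (𝓕 f)) (x : ℝ) :
    s⁻¹ • ∫ y, Ai ((x - y) / s) • f y =
      𝓕⁻ (fun η => airyMultiplier (s ^ 3 / 3) η • 𝓕 f η) x := by
  have hmul : Integrable fun η => airyMultiplier (s ^ 3 / 3) η • 𝓕 f η :=
    hfhat.bdd_smul _ (continuous_airyMultiplier _).aestronglyMeasurable
      (.of_forall fun η => (norm_airyMultiplier _ η).le)
  have hkernel : Integrable fun y : ℝ => ((x - y) / s) • f y := by
    refine (((hf.smul x).sub hf').smul s⁻¹).congr (.of_forall fun y => ?_)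
    simp only [Pi.smul_apply, Pi.sub_apply, ← sub_smul, smul_smul, div_eq_inv_mul]
  have hAi := (tendsto_integral_truncAi_smul (g := fun y => (x - y) / s)
    (Continuous.aestronglyMeasurable (by fun_prop)) hf hkernel).const_smul s⁻¹
  have hAi' := hAi.comp (tendsto_id.const_mul_atTop (by positivity : 0 < 2 * π * s))
  refine tendsto_nhds_unique (hAi'.congr' ?_) (tendsto_fourierInv_indicator
    (aecover_Ioc tendsto_neg_atTop_atBot tendsto_id) hmul x)
  filter_upwards [eventually_ge_atTop 0] with ρ hρ
  exact inv_smul_integral_truncAi_smul hs hρ hf x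

end FourierInversion

lemma w_eq_fourierInv (φ : 𝓢(ℝ, ℂ)) {t : ℝ} (ht : 0 < t) (x : ℝ) :
    w φ t x = 𝓕⁻ (fun η => airyMultiplier t η • 𝓕 φ η) x := by
  have hcube : ((3 * t) ^ (1 / 3 : ℝ)) ^ 3 / 3 = t := by
    rw [← Real.rpow_natCast, ← Real.rpow_mul (by positivity)]
    norm_num
  have hmoment : Integrable fun y : ℝ => y • φ y := by
    refine (integrable_norm_iff (Continuous.aestronglyMeasurable (by fun_prop))).1 ?_
    simpa only [norm_smul, pow_one] using φ.integrable_pow_mul volume 1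
  have hkernel := inv_smul_integral_Ai_smul (s := (3 * t) ^ (1 / 3 : ℝ)) (by positivity)
    φ.integrable hmoment (SchwartzMap.fourier_coe φ ▸ (𝓕 φ).integrable) x
  simpa only [w, hcube, Complex.real_smul, SchwartzMap.fourier_coe] using hkernel

/-! ### Oscillatory integrals with linear phase -/

section OscillatoryIntegral

variable {α : Type*} [MeasurableSpace α] {μ : Measure α}

/-- The superposition `v ↦ ∫ exp (i p(a) v) g(a) dμ(a)` of plane waves with frequencies `p a` and
amplitudes `g a`. -/
noncomputable def oscillatoryIntegral {E F : Type*} [NormedAddCommGroup E] [NormedSpace ℝ E]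
    [NormedAddCommGroup F] [NormedSpace ℂ F] (μ : Measure α) (p : α → E →L[ℝ] ℝ) (g : α → F)
    (v : E) : F :=
  ∫ a, Complex.exp (p a v * Complex.I) • g a ∂μ

/-- All moments of the amplitude `g` with respect to the frequency `p` are finite, so that
`oscillatoryIntegral μ p g` may be differentiated under the integral sign arbitrarily often. -/
structure HasMoments {E F : Type*} [NormedAddCommGroup E] [NormedSpace ℝ E]
    [NormedAddCommGroup F] [NormedSpace ℝ F] (μ : Measure α) (p : α → E →L[ℝ] ℝ)
    (g : α → F) : Prop where
  aestronglyMeasurable : AEStronglyMeasurable p μ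
  integrable_norm_pow_smul : ∀ n : ℕ, Integrable (fun a => ‖p a‖ ^ n • g a) μ

namespace HasMoments

-- `E` and `F` share a universe so that the induction in `contDiff_oscillatoryIntegral` can replace
-- `F` by `E →L[ℝ] F`.
universe u

variable {E F : Type u} {G : Type*} [NormedAddCommGroup E] [NormedSpace ℝ E] [NormedAddCommGroup F]
  [NormedSpace ℂ F] [NormedAddCommGroup G] [NormedSpace ℝ G] {p : α → E →L[ℝ] ℝ} {g : α → F}

lemma integrable (h : HasMoments μ p g) : Integrable g μ := by
  simpa using h.integrable_norm_pow_smul 0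

lemma clm_apply (h : HasMoments μ p g) (L : F →L[ℝ] G) : HasMoments μ p fun a => L (g a) where
  aestronglyMeasurable := h.aestronglyMeasurable
  integrable_norm_pow_smul n := by
    simpa only [map_smul] using L.integrable_comp (h.integrable_norm_pow_smul n)

lemma smulRight (h : HasMoments μ p g) :
    HasMoments μ p fun a => (p a).smulRight (Complex.I • g a) where
  aestronglyMeasurable := h.aestronglyMeasurable
  integrable_norm_pow_smul n := by
    have hmeas : AEStronglyMeasurable (fun a => (p a).smulRight (Complex.I • g a)) μ :=
      (ContinuousLinearMap.smulRightL ℝ E F).aestronglyMeasurable_comp₂ h.aestronglyMeasurable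
        (h.integrable.1.const_smul _)
    refine (h.integrable_norm_pow_smul (n + 1)).norm.mono
      ((h.aestronglyMeasurable.norm.pow n).smul hmeas) (.of_forall fun a => le_of_eq ?_)
    simp only [norm_smul, norm_pow, norm_norm, ContinuousLinearMap.norm_smulRight_apply,
      Complex.norm_I, one_mul, pow_succ, norm_mul, mul_assoc]

lemma smul_apply (h : HasMoments μ p g) (e : E) :
    HasMoments μ p fun a => (p a e * Complex.I) • g a := by
  simpa [mul_smul] using h.smulRight.clm_apply (ContinuousLinearMap.apply ℝ F e)

lemma integrable_cexp_smul (h : HasMoments μ p g) (v : E) :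
    Integrable (fun a => Complex.exp (p a v * Complex.I) • g a) μ :=
  h.integrable.bdd_smul 1 (Complex.continuous_exp.comp_aestronglyMeasurable
      ((Complex.continuous_ofReal.comp_aestronglyMeasurable
        (h.aestronglyMeasurable.apply_continuousLinearMap v)).mul_const _))
    (.of_forall fun _ => (Complex.norm_exp_ofReal_mul_I _).le)

lemma hasFDerivAt_oscillatoryIntegral (h : HasMoments μ p g) (v : E) :
    HasFDerivAt (oscillatoryIntegral μ p g)
      (oscillatoryIntegral μ p (fun a => (p a).smulRight (Complex.I • g a)) v) v := by
  refine hasFDerivAt_integral_of_dominated_of_fderiv_le (s := univ)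
    (F' := fun v a => Complex.exp (p a v * Complex.I) • (p a).smulRight (Complex.I • g a))
    (bound := fun a => ‖(p a).smulRight (Complex.I • g a)‖) univ_mem
    (.of_forall fun v => (h.integrable_cexp_smul v).1) (h.integrable_cexp_smul v)
    (h.smulRight.integrable_cexp_smul v).1 (.of_forall fun a v _ => ?_)
    h.smulRight.integrable.norm (.of_forall fun a v _ => ?_)
  · rw [norm_smul, Complex.norm_exp_ofReal_mul_I, one_mul]
  · have hphase : HasFDerivAt (fun v => (p a v : ℂ) * Complex.I)
        ((p a).smulRight Complex.I) v := ((p a).smulRight Complex.I).hasFDerivAt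
    convert! hphase.cexp.smul_const (g a) using 1
    ext e
    simp [mul_smul, smul_comm (p a e)]

lemma contDiff_oscillatoryIntegral (h : HasMoments μ p g) :
    ContDiff ℝ (⊤ : ℕ∞) (oscillatoryIntegral μ p g) := by
  refine contDiff_infty.2 fun n => ?_
  induction n generalizing F with
  | zero =>
    exact contDiff_zero.2 (continuous_iff_continuousAt.2 fun v =>
      (h.hasFDerivAt_oscillatoryIntegral v).continuousAt)
  | succ n ih =>
    exact_mod_cast contDiff_succ_iff_hasFDerivAt.2
      ⟨_, ih h.smulRight, h.hasFDerivAt_oscillatoryIntegral⟩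

lemma hasDerivAt_oscillatoryIntegral (h : HasMoments μ p g) (v e : E) (s : ℝ) :
    HasDerivAt (fun s : ℝ => oscillatoryIntegral μ p g (v + s • e))
      (oscillatoryIntegral μ p (fun a => (p a e * Complex.I) • g a) (v + s • e)) s := by
  have hline : HasDerivAt (fun s : ℝ => v + s • e) e s := by
    simpa using ((hasDerivAt_id s).smul_const e).const_add v
  convert! (h.hasFDerivAt_oscillatoryIntegral (v + s • e)).comp_hasDerivAt s hline using 1
  rw [oscillatoryIntegral, oscillatoryIntegral,
    ContinuousLinearMap.integral_apply (h.smulRight.integrable_cexp_smul _)]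
  simp [mul_smul]

lemma iteratedDeriv_oscillatoryIntegral (h : HasMoments μ p g) (v e : E) (n : ℕ) :
    iteratedDeriv n (fun s : ℝ => oscillatoryIntegral μ p g (v + s • e)) =
      fun s => oscillatoryIntegral μ p (fun a => (p a e * Complex.I) ^ n • g a) (v + s • e) := by
  induction n generalizing g with
  | zero => simp
  | succ n ih =>
    have hderiv := funext fun s => (h.hasDerivAt_oscillatoryIntegral v e s).deriv
    simp only [iteratedDeriv_succ', hderiv, ih (h.smul_apply e), smul_smul, pow_succ]

lemma of_hasTemperateGrowth {V : Type*} [NormedAddCommGroup V] [NormedSpace ℝ V]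
    [MeasurableSpace V] [BorelSpace V] [SecondCountableTopology V] {μ : Measure V}
    [μ.HasTemperateGrowth] {p : V → E →L[ℝ] ℝ} (hp : p.HasTemperateGrowth) (f : 𝓢(V, F)) :
    HasMoments μ p f where
  aestronglyMeasurable := hp.1.continuous.aestronglyMeasurable
  integrable_norm_pow_smul n := by
    obtain ⟨k, C, hC⟩ := hp.2 0
    simp only [norm_iteratedFDeriv_zero] at hC
    have hC_nonneg : 0 ≤ C := by simpa using (norm_nonneg _).trans (hC 0)
    have hbound := ((f.integrable_pow_mul μ 0).add (f.integrable_pow_mul μ (k * n))).const_mul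
      (C ^ n * 2 ^ (k * n - 1))
    refine hbound.mono ((hp.1.continuous.norm.pow n).smul f.continuous).aestronglyMeasurable
      (.of_forall fun x => ?_)
    have hpow : ‖p x‖ ^ n ≤ C ^ n * (2 ^ (k * n - 1) * (1 + ‖x‖ ^ (k * n))) := calc
      ‖p x‖ ^ n ≤ (C * (1 + ‖x‖) ^ k) ^ n := by gcongr; exact hC x
      _ = C ^ n * (1 + ‖x‖) ^ (k * n) := by rw [mul_pow, pow_mul]
      _ ≤ C ^ n * (2 ^ (k * n - 1) * (1 + ‖x‖ ^ (k * n))) := by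
        gcongr
        simpa using add_pow_le zero_le_one (norm_nonneg x) (k * n)
    refine le_trans ?_ (le_abs_self _)
    calc ‖‖p x‖ ^ n • f x‖ = ‖p x‖ ^ n * ‖f x‖ := by rw [norm_smul, norm_pow, norm_norm]
      _ ≤ C ^ n * (2 ^ (k * n - 1) * (1 + ‖x‖ ^ (k * n))) * ‖f x‖ := by gcongr
      _ = C ^ n * 2 ^ (k * n - 1) * (‖x‖ ^ 0 * ‖f x‖ + ‖x‖ ^ (k * n) * ‖f x‖) := by ring

end HasMoments

end OscillatoryIntegral

/-! ### Smoothness and the differential equation -/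

/-- The phase `t (2πη)³ + x (2πη)` of the Fourier representation of `w φ t x`, as a linear form in
`(t, x)`. -/
noncomputable def airyPhase (η : ℝ) : ℝ × ℝ →L[ℝ] ℝ :=
  (2 * π * η) ^ 3 • ContinuousLinearMap.fst ℝ ℝ ℝ + (2 * π * η) • ContinuousLinearMap.snd ℝ ℝ ℝ

lemma hasTemperateGrowth_airyPhase : airyPhase.HasTemperateGrowth := by
  unfold airyPhase
  fun_prop

lemma hasMoments_airyPhase (f : 𝓢(ℝ, ℂ)) : HasMoments volume airyPhase f :=
  .of_hasTemperateGrowth hasTemperateGrowth_airyPhase f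

lemma w_eq_oscillatoryIntegral (φ : 𝓢(ℝ, ℂ)) {t : ℝ} (ht : 0 < t) (x : ℝ) :
    w φ t x = oscillatoryIntegral volume airyPhase (𝓕 φ : 𝓢(ℝ, ℂ)) (t, x) := by
  rw [w_eq_fourierInv φ ht, Real.fourierInv_eq']
  congr 1 with η
  rw [airyMultiplier, smul_smul, ← Complex.exp_add, ← add_mul, ← Complex.ofReal_add]
  congr 4
  simp only [RCLike.inner_apply, ringHom_apply, airyPhase, add_apply, smul_apply,
    ContinuousLinearMap.coe_fst', smul_eq_mul, ContinuousLinearMap.coe_snd']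
  ring

lemma contDiffOn_w (φ : 𝓢(ℝ, ℂ)) :
    ContDiffOn ℝ (⊤ : ℕ∞) (fun p : ℝ × ℝ => w φ p.1 p.2) (Ioi 0 ×ˢ univ) :=
  (hasMoments_airyPhase (𝓕 φ)).contDiff_oscillatoryIntegral.contDiffOn.congr
    fun p hp => w_eq_oscillatoryIntegral φ hp.1 p.2

lemma deriv_w_add_iteratedDeriv_w (φ : 𝓢(ℝ, ℂ)) {t : ℝ} (ht : 0 < t) (x : ℝ) :
    deriv (fun s => w φ s x) t + iteratedDeriv 3 (fun y => w φ t y) x = 0 := by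
  have hφ := hasMoments_airyPhase (𝓕 φ)
  have htime : (fun s => w φ s x) =ᶠ[𝓝 t]
      fun s => oscillatoryIntegral volume airyPhase (𝓕 φ : 𝓢(ℝ, ℂ)) ((0, x) + s • (1, 0)) := by
    filter_upwards [Ioi_mem_nhds ht] with s hs
    simp [w_eq_oscillatoryIntegral φ hs]
  have hspace : (fun y => w φ t y) =
      fun y => oscillatoryIntegral volume airyPhase (𝓕 φ : 𝓢(ℝ, ℂ)) ((t, 0) + y • (0, 1)) := by
    ext y
    simp [w_eq_oscillatoryIntegral φ ht]
  have hsymbol : ∀ η : ℝ, ((airyPhase η (0, 1) : ℂ) * Complex.I) ^ 3 =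
      -((airyPhase η (1, 0) : ℂ) * Complex.I) := fun η => by
    simp [airyPhase, mul_pow]
  rw [htime.deriv_eq, (hφ.hasDerivAt_oscillatoryIntegral _ _ t).deriv, hspace,
    hφ.iteratedDeriv_oscillatoryIntegral]
  simp [oscillatoryIntegral, hsymbol, integral_neg]

/-! ### Convergence to the initial datum -/

lemma tendsto_eLpNorm_zero_of_dominated {α E ι : Type*} [MeasurableSpace α] {μ : Measure α}
    [NormedAddCommGroup E] {l : Filter ι} [l.IsCountablyGenerated] {q : ℝ≥0∞} (hq : q ≠ ∞)
    {f : ι → α → E} {g : α → ℝ} (hf : ∀ᶠ i in l, AEStronglyMeasurable (f i) μ)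
    (hg : MemLp g q μ) (hfg : ∀ᶠ i in l, ∀ᵐ a ∂μ, ‖f i a‖ ≤ g a)
    (hlim : ∀ᵐ a ∂μ, Tendsto (fun i => f i a) l (𝓝 0)) :
    Tendsto (fun i => eLpNorm (f i) q μ) l (𝓝 0) := by
  rcases eq_or_ne q 0 with rfl | hq0
  · simpa using tendsto_const_nhds
  have hq_pos : 0 < q.toReal := ENNReal.toReal_pos hq0 hq
  have hpow : Tendsto (fun i => ∫⁻ a, ‖f i a‖ₑ ^ q.toReal ∂μ) l (𝓝 (∫⁻ _, 0 ∂μ)) := by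
    refine tendsto_lintegral_filter_of_dominated_convergence' (fun a => ‖g a‖ₑ ^ q.toReal)
      (hf.mono fun i hi => hi.enorm.pow_const _) (hfg.mono fun i hi => hi.mono fun a ha => ?_)
      (lintegral_rpow_enorm_lt_top_of_eLpNorm_lt_top hq0 hq hg.2).ne (hlim.mono fun a ha => ?_)
    · gcongr
      exact enorm_le_iff_norm_le.2 (ha.trans (le_abs_self _))
    · simpa [Function.comp_def, hq_pos] using
        (ENNReal.continuous_rpow_const (y := q.toReal)).tendsto _ |>.comp ha.enorm
  have hroot := (ENNReal.continuous_rpow_const (y := 1 / q.toReal)).tendsto _ |>.comp hpow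
  simpa [Function.comp_def, eLpNorm_eq_lintegral_rpow_enorm_toReal hq0 hq, hq_pos] using hroot

lemma iteratedDeriv_cexp_ofReal_mul_I (n : ℕ) :
    iteratedDeriv n (fun θ : ℝ => Complex.exp (θ * Complex.I)) =
      fun θ : ℝ => Complex.I ^ n * Complex.exp (θ * Complex.I) := by
  induction n with
  | zero => simp
  | succ n ih =>
    ext θ
    have hphase : HasDerivAt (fun θ : ℝ => (θ : ℂ) * Complex.I) Complex.I θ := by
      simpa using (hasDerivAt_id θ).ofReal_comp.mul_const Complex.I
    rw [iteratedDeriv_succ, ih, (hphase.cexp.const_mul (Complex.I ^ n)).deriv]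
    ring

lemma hasTemperateGrowth_cexp_ofReal_mul_I {V : Type*} [NormedAddCommGroup V] [NormedSpace ℝ V]
    {p : V → ℝ} (hp : p.HasTemperateGrowth) :
    Function.HasTemperateGrowth fun v => Complex.exp (p v * Complex.I) := by
  have hexp : Function.HasTemperateGrowth fun θ : ℝ => Complex.exp (θ * Complex.I) := by
    refine ⟨(Complex.ofRealCLM.contDiff.mul contDiff_const).cexp, fun n => ⟨0, 1, fun θ => ?_⟩⟩
    simp [norm_iteratedFDeriv_eq_norm_iteratedDeriv, iteratedDeriv_cexp_ofReal_mul_I,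
      Complex.norm_exp_ofReal_mul_I]
  exact hexp.comp hp

section FourierMultiplier

variable {V H : Type*} [NormedAddCommGroup V] [InnerProductSpace ℝ V] [FiniteDimensional ℝ V]
  [MeasurableSpace V] [BorelSpace V] [NormedAddCommGroup H] [InnerProductSpace ℂ H]
  [CompleteSpace H]

lemma eLpNorm_two_fourier (f : 𝓢(V, H)) :
    eLpNorm (𝓕 f : 𝓢(V, H)) 2 volume = eLpNorm f 2 volume := by
  have hplancherel := SchwartzMap.norm_fourier_toL2_eq f
  rwa [SchwartzMap.norm_toLp, SchwartzMap.norm_toLp, ENNReal.toReal_eq_toReal_iff'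
    ((𝓕 f).memLp 2 volume).2.ne (f.memLp 2 volume).2.ne] at hplancherel

lemma tendsto_eLpNorm_fourierMultiplierCLM_sub {ι : Type*} {l : Filter ι}
    [l.IsCountablyGenerated] {m : ι → V → ℂ} {C : ℝ} (hm : ∀ i, (m i).HasTemperateGrowth)
    (hC : ∀ i η, ‖m i η‖ ≤ C) (hlim : ∀ η, Tendsto (fun i => m i η) l (𝓝 1)) (f : 𝓢(V, H)) :
    Tendsto (fun i => eLpNorm (SchwartzMap.fourierMultiplierCLM H (m i) f - f) 2 volume) l
      (𝓝 0) := by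
  have hfourier : ∀ i, eLpNorm (SchwartzMap.fourierMultiplierCLM H (m i) f - f) 2 volume =
      eLpNorm (fun η => (m i η - 1) • 𝓕 f η) 2 volume := fun i => by
    rw [← eLpNorm_two_fourier, sub_eq_add_neg, FourierTransform.fourier_add,
      FourierTransform.fourier_neg, ← sub_eq_add_neg, SchwartzMap.fourierMultiplierCLM_apply,
      FourierTransform.fourier_fourierInv_eq]
    congr 1 with η
    rw [sub_apply, SchwartzMap.smulLeftCLM_apply_apply (hm i), sub_smul, one_smul]
  simp only [hfourier]
  refine tendsto_eLpNorm_zero_of_dominated (g := fun η => (C + 1) * ‖𝓕 f η‖) (by simp) ?_ ?_ ?_ ?_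
  · exact .of_forall fun i => (((hm i).1.continuous.sub continuous_const).smul
      (𝓕 f).continuous).aestronglyMeasurable
  · exact ((𝓕 f).memLp 2 volume).norm.const_mul _
  · refine .of_forall fun i => .of_forall fun η => ?_
    rw [norm_smul]
    gcongr
    exact (norm_sub_le _ _).trans (by simpa using hC i η)
  · refine .of_forall fun η => ?_
    simpa using ((hlim η).sub_const 1).smul_const (𝓕 f η)

end FourierMultiplier

lemma hasTemperateGrowth_airyMultiplier (t : ℝ) : (airyMultiplier t).HasTemperateGrowth :=
  hasTemperateGrowth_cexp_ofReal_mul_I (p := fun η => t * (2 * π * η) ^ 3) (by fun_prop)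

lemma w_eq_fourierMultiplierCLM (φ : 𝓢(ℝ, ℂ)) {t : ℝ} (ht : 0 < t) :
    w φ t = SchwartzMap.fourierMultiplierCLM ℂ (airyMultiplier t) φ := by
  ext x
  rw [w_eq_fourierInv φ ht, SchwartzMap.fourierMultiplierCLM_apply, SchwartzMap.fourierInv_coe,
    SchwartzMap.smulLeftCLM_apply (hasTemperateGrowth_airyMultiplier t)]

lemma tendsto_eLpNorm_w_sub (φ : 𝓢(ℝ, ℂ)) :
    Tendsto (fun t => eLpNorm (fun x => w φ t x - φ x) 2 volume) (𝓝[>] 0) (𝓝 0) := by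
  have hlim : ∀ η, Tendsto (fun t => airyMultiplier t η) (𝓝[>] 0) (𝓝 1) := fun η => by
    have hcont : Continuous fun t => airyMultiplier t η := by
      unfold airyMultiplier
      fun_prop
    simpa [airyMultiplier] using (hcont.tendsto 0).mono_left nhdsWithin_le_nhds
  refine (tendsto_eLpNorm_fourierMultiplierCLM_sub hasTemperateGrowth_airyMultiplier
    (fun t η => (norm_airyMultiplier t η).le) hlim φ).congr' ?_
  filter_upwards [self_mem_nhdsWithin] with t ht
  congr 1 with x
  rw [sub_apply, w_eq_fourierMultiplierCLM φ ht]

/-- For Schwartz `φ`, the function `w` is smooth on `(0,∞) × ℝ`, solves the linear KdV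
equation `∂ₜ w + ∂ₓ³ w = 0` there, and `w(t, ·) → φ` in `L²` as `t → 0⁺`. -/
theorem kdv_solution_properties (φ : SchwartzMap ℝ ℂ) :
    ContDiffOn ℝ (⊤ : ℕ∞) (fun p : ℝ × ℝ => w (⇑φ) p.1 p.2) (Ioi (0:ℝ) ×ˢ univ) ∧
    (∀ t : ℝ, 0 < t → ∀ x : ℝ,
      deriv (fun s : ℝ => w (⇑φ) s x) t + iteratedDeriv 3 (fun y : ℝ => w (⇑φ) t y) x = 0) ∧
    Tendsto (fun t : ℝ => eLpNorm (fun x : ℝ => w (⇑φ) t x - φ x) 2 (volume : Measure ℝ))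
      (𝓝[>] (0:ℝ)) (𝓝 0) :=
  ⟨contDiffOn_w φ, fun _ ht x => deriv_w_add_iteratedDeriv_w φ ht x, tendsto_eLpNorm_w_sub φ⟩
end
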